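/- Let (Q,·,e) be a left C loop, i.e., a loop satisfying x·(x·(y·z)) = ((x·x)·y)·z for all x,y,z, and let N = Nuc_ℓ(Q). Then the set {L_a : a ∈ N} is a normal subgroup of the multiplication group Mlt(Q) = ⟨L_x, R_x : x ∈ Q⟩, and N is a normal subloop of Q. -/

import Mathlib

/-- A loop `(Q, ·, e)`: a quasigroup with two-sided identity, presented with
explicit left division `ldiv a b = a \ b` and right division `rdiv b a = b / a`. -/
structure LoopStr (Q : Type*) where
  mul : Q → Q → Q
  e : Q
  ldiv : Q → Q → Q
  rdiv : Q → Q → Q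
  one_mul : ∀ x, mul e x = x
  mul_one : ∀ x, mul x e = x
  mul_ldiv : ∀ a b, mul a (ldiv a b) = b
  ldiv_mul : ∀ a b, ldiv a (mul a b) = b
  rdiv_mul : ∀ a b, mul (rdiv b a) a = b
  mul_rdiv : ∀ a b, rdiv (mul b a) a = b

namespace LoopStr

variable {Q : Type*} (S : LoopStr Q)

/-- The left inverse `x^ℓ = e / x`. -/
def linv (x : Q) : Q := S.rdiv S.e x

/-- The right inverse `x^r = x \ e`. -/
def rinv (x : Q) : Q := S.ldiv x S.e

/-- The left nucleus. -/
def lnuc : Set Q := {a | ∀ x y, S.mul (S.mul a x) y = S.mul a (S.mul x y)}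

/-- The middle nucleus. -/
def mnuc : Set Q := {a | ∀ x y, S.mul (S.mul x a) y = S.mul x (S.mul a y)}

/-- The right nucleus. -/
def rnuc : Set Q := {a | ∀ x y, S.mul (S.mul x y) a = S.mul x (S.mul y a)}

/-- The commutant `C(Q)`. -/
def commutant : Set Q := {a | ∀ x, S.mul a x = S.mul x a}

/-- The center `Z(Q) = C(Q) ∩ Nuc_ℓ ∩ Nuc_m ∩ Nuc_r`. -/
def center : Set Q := S.commutant ∩ S.lnuc ∩ S.mnuc ∩ S.rnuc

/-- The left translation `L_a` as a map. -/
def leftMul (a : Q) : Q → Q := fun x => S.mul a x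

/-- The left translation `L_a` as a permutation of `Q`. -/
def leftPerm (a : Q) : Equiv.Perm Q :=
  ⟨fun x => S.mul a x, fun x => S.ldiv a x, S.ldiv_mul a, S.mul_ldiv a⟩

/-- The right translation `R_a` as a permutation of `Q`. -/
def rightPerm (a : Q) : Equiv.Perm Q :=
  ⟨fun x => S.mul x a, fun x => S.rdiv x a, fun x => S.mul_rdiv a x, fun x => S.rdiv_mul a x⟩

/-- The multiplication group `Mlt(Q) = ⟨L_x, R_x : x ∈ Q⟩ ≤ Sym(Q)`. -/
def Mlt : Subgroup (Equiv.Perm Q) :=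
  Subgroup.closure (Set.range S.leftPerm ∪ Set.range S.rightPerm)

/-- `x^n = L_x^n(e)` for natural `n`. -/
def npow (a : Q) (n : ℕ) : Q := (S.leftPerm a ^ n) S.e

/-- `x^n = L_x^n(e)` for integer `n`. -/
def zpow (a : Q) (n : ℤ) : Q := (S.leftPerm a ^ n) S.e

/-- The order of an element: the least `n > 0` with `x^n = e` (or `0` if none exists). -/
noncomputable def lorder (a : Q) : ℕ := sInf {n : ℕ | 0 < n ∧ S.npow a n = S.e}

/-- A subloop: contains `e`, closed under multiplication and both divisions. -/
def IsSubloop (N : Set Q) : Prop :=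
  S.e ∈ N ∧ (∀ a ∈ N, ∀ b ∈ N, S.mul a b ∈ N) ∧
    (∀ a ∈ N, ∀ b ∈ N, S.ldiv a b ∈ N) ∧ (∀ a ∈ N, ∀ b ∈ N, S.rdiv a b ∈ N)

/-- A normal subloop: a subloop with `xN = Nx`, `(xN)y = x(Ny)`, `N(xy) = (Nx)y`
elementwise as sets. -/
def IsNormalSubloop (N : Set Q) : Prop :=
  S.IsSubloop N ∧
  (∀ x : Q, (fun a => S.mul x a) '' N = (fun a => S.mul a x) '' N) ∧
  (∀ x y : Q, (fun a => S.mul (S.mul x a) y) '' N = (fun a => S.mul x (S.mul a y)) '' N) ∧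
  (∀ x y : Q, (fun a => S.mul a (S.mul x y)) '' N = (fun a => S.mul (S.mul a x) y) '' N)

/-- A loop is simple if its only normal subloops are `{e}` and `Q`. -/
def IsSimple : Prop :=
  ∀ N : Set Q, S.IsNormalSubloop N → N = {S.e} ∨ N = Set.univ

lemma mul_rinv (x : Q) : S.mul x (S.rinv x) = S.e := S.mul_ldiv x S.e

lemma linv_mul (x : Q) : S.mul (S.linv x) x = S.e := S.rdiv_mul x S.e

lemma linv_rinv (x : Q) : S.linv (S.rinv x) = x := by
  have h := S.mul_rdiv (S.rinv x) x
  rw [S.mul_rinv] at h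
  exact h

lemma rinv_linv (x : Q) : S.rinv (S.linv x) = x := by
  have h := S.ldiv_mul (S.linv x) x
  rw [S.linv_mul] at h
  exact h

lemma rinv_e : S.rinv S.e = S.e := by
  have h := S.ldiv_mul S.e S.e
  rw [S.one_mul] at h
  exact h

lemma rdiv_e (x : Q) : S.rdiv x S.e = x := by
  have h := S.mul_rdiv S.e x
  rw [S.mul_one] at h
  exact h

/-- The principal right isostrophe `(Q, ∘)` of `(Q, ·)`, with `x ∘ y = x / (y^r)`,
right division `x // y = x·(y^r)` and left division `x \\ y = (y \ x)^ℓ`. -/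
def iso : LoopStr Q where
  mul x y := S.rdiv x (S.rinv y)
  e := S.e
  ldiv x y := S.linv (S.ldiv y x)
  rdiv x y := S.mul x (S.rinv y)
  one_mul x := S.linv_rinv x
  mul_one x := by
    show S.rdiv x (S.rinv S.e) = x
    rw [S.rinv_e, S.rdiv_e]
  mul_ldiv a b := by
    show S.rdiv a (S.rinv (S.linv (S.ldiv b a))) = b
    rw [S.rinv_linv]
    have h := S.mul_rdiv (S.ldiv b a) b
    rw [S.mul_ldiv] at h
    exact h
  ldiv_mul a b := by
    show S.linv (S.ldiv (S.rdiv a (S.rinv b)) a) = b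
    have h := S.ldiv_mul (S.rdiv a (S.rinv b)) (S.rinv b)
    rw [S.rdiv_mul] at h
    rw [h, S.linv_rinv]
  rdiv_mul a b := by
    show S.rdiv (S.mul b (S.rinv a)) (S.rinv a) = b
    exact S.mul_rdiv (S.rinv a) b
  mul_rdiv a b := by
    show S.mul (S.rdiv b (S.rinv a)) (S.rinv a) = b
    exact S.rdiv_mul (S.rinv a) b

end LoopStr

namespace LoopStr

variable {Q : Type*} (S : LoopStr Q)

lemma mul_left_cancel {a b c : Q} (h : S.mul a b = S.mul a c) : b = c := by
  rw [← S.ldiv_mul a b, h, S.ldiv_mul]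

lemma ldiv_self (a : Q) : S.ldiv a a = S.e := by
  simpa only [S.mul_one] using S.ldiv_mul a S.e

/-- The permutations of `Q` commuting with every right translation. -/
def rightCentralizer : Subgroup (Equiv.Perm Q) :=
  Subgroup.centralizer (Set.range S.rightPerm)

lemma mem_rightCentralizer_iff {p : Equiv.Perm Q} :
    p ∈ S.rightCentralizer ↔ ∀ x y, S.mul (p x) y = p (S.mul x y) := by
  simp only [rightCentralizer, Subgroup.mem_centralizer_iff, Set.forall_mem_range, Equiv.ext_iff]
  exact forall_comm

lemma leftPerm_mem_rightCentralizer_iff {a : Q} :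
    S.leftPerm a ∈ S.rightCentralizer ↔ a ∈ S.lnuc :=
  S.mem_rightCentralizer_iff

lemma leftPerm_apply_e {p : Equiv.Perm Q} (hp : p ∈ S.rightCentralizer) :
    S.leftPerm (p S.e) = p := by
  ext x
  change S.mul (p S.e) x = p x
  rw [S.mem_rightCentralizer_iff.1 hp, S.one_mul]

lemma apply_e_mem_lnuc {p : Equiv.Perm Q} (hp : p ∈ S.rightCentralizer) : p S.e ∈ S.lnuc := by
  rwa [← S.leftPerm_mem_rightCentralizer_iff, S.leftPerm_apply_e hp]

lemma leftPerm_image_lnuc :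
    S.leftPerm '' S.lnuc = (S.rightCentralizer : Set (Equiv.Perm Q)) := by
  ext p
  constructor
  · rintro ⟨a, ha, rfl⟩
    exact S.leftPerm_mem_rightCentralizer_iff.2 ha
  · exact fun hp => ⟨p S.e, S.apply_e_mem_lnuc hp, S.leftPerm_apply_e hp⟩

lemma isSubloop_lnuc : S.IsSubloop S.lnuc := by
  refine ⟨fun x y => by rw [S.one_mul, S.one_mul], fun a ha b hb x y => ?_,
    fun a ha b hb => ?_, fun a ha b hb => ?_⟩
  · rw [ha, ha, ha, hb]
  · have h := S.apply_e_mem_lnuc (mul_mem (inv_mem (S.leftPerm_mem_rightCentralizer_iff.2 ha))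
      (S.leftPerm_mem_rightCentralizer_iff.2 hb))
    change S.ldiv a (S.mul b S.e) ∈ S.lnuc at h
    rwa [S.mul_one] at h
  · have hp := mul_mem (S.leftPerm_mem_rightCentralizer_iff.2 ha)
      (inv_mem (S.leftPerm_mem_rightCentralizer_iff.2 hb))
    have h : S.mul (S.mul a (S.ldiv b S.e)) b = S.mul a (S.ldiv b (S.mul S.e b)) :=
      S.mem_rightCentralizer_iff.1 hp S.e b
    rw [S.one_mul, S.ldiv_self, S.mul_one] at h
    rw [← h, S.mul_rdiv]
    exact S.apply_e_mem_lnuc hp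

/-- The left C identity `x·(x·(y·z)) = ((x·x)·y)·z`. -/
def IsLeftC : Prop :=
  ∀ x y z : Q, S.mul x (S.mul x (S.mul y z)) = S.mul (S.mul (S.mul x x) y) z

namespace IsLeftC

variable {S}

lemma mul_self_mul (hS : S.IsLeftC) (x y : Q) :
    S.mul (S.mul x x) y = S.mul x (S.mul x y) := by
  simpa only [S.mul_one] using (hS x y S.e).symm

lemma mul_self_mem_lnuc (hS : S.IsLeftC) (x : Q) : S.mul x x ∈ S.lnuc := fun y z => by
  rw [← hS, hS.mul_self_mul]

lemma mul_rinv_mul (hS : S.IsLeftC) (x y : Q) : S.mul x (S.mul (S.rinv x) y) = y := by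
  apply S.mul_left_cancel (a := x)
  rw [hS, hS.mul_self_mul, S.mul_rinv, S.mul_one]

lemma rinv_mul_mul (hS : S.IsLeftC) (x y : Q) : S.mul (S.rinv x) (S.mul x y) = y := by
  apply S.mul_left_cancel (a := x)
  rw [hS.mul_rinv_mul]

lemma lnuc_subset_mnuc (hS : S.IsLeftC) : S.lnuc ⊆ S.mnuc := by
  intro a ha x y
  obtain ⟨t, ht⟩ : ∃ t, S.mul a t = S.linv x := ⟨_, S.mul_ldiv a _⟩
  have key (z : Q) : S.mul x (S.mul a z) = S.mul (S.rinv t) z := by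
    have h := hS.rinv_mul_mul (S.linv x) (S.mul (S.rinv t) z)
    rwa [S.rinv_linv, ← ht, ha, hS.mul_rinv_mul] at h
  have hxa := key S.e
  rw [S.mul_one, S.mul_one] at hxa
  rw [key, hxa]

lemma leftPerm_mul_self_mem (hS : S.IsLeftC) (x : Q) :
    S.leftPerm x * S.leftPerm x ∈ S.rightCentralizer := by
  have h : S.leftPerm x * S.leftPerm x = S.leftPerm (S.mul x x) :=
    Equiv.ext fun y => (hS.mul_self_mul x y).symm
  rw [h, S.leftPerm_mem_rightCentralizer_iff]
  exact hS.mul_self_mem_lnuc x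

lemma leftPerm_conj_mem (hS : S.IsLeftC) (x : Q) {p : Equiv.Perm Q}
    (hp : p ∈ S.rightCentralizer) :
    S.leftPerm x * p * (S.leftPerm x)⁻¹ ∈ S.rightCentralizer := by
  have hxp : S.leftPerm (S.mul x (p S.e)) = S.leftPerm x * p := by
    conv_rhs => rw [← S.leftPerm_apply_e hp]
    exact Equiv.ext fun y => hS.lnuc_subset_mnuc (S.apply_e_mem_lnuc hp) x y
  have h := mul_mem (mul_mem (hS.leftPerm_mul_self_mem (S.mul x (p S.e))) (inv_mem hp))
    (inv_mem (hS.leftPerm_mul_self_mem x))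
  rw [hxp] at h
  convert h using 1
  group

lemma leftPerm_inv_conj_mem (hS : S.IsLeftC) (x : Q) {p : Equiv.Perm Q}
    (hp : p ∈ S.rightCentralizer) :
    (S.leftPerm x)⁻¹ * p * S.leftPerm x ∈ S.rightCentralizer := by
  have hx := hS.leftPerm_mul_self_mem x
  have h := mul_mem (mul_mem (inv_mem hx) (hS.leftPerm_conj_mem x hp)) hx
  convert h using 1
  group

lemma Mlt_le_normalizer (hS : S.IsLeftC) :
    S.Mlt ≤ Subgroup.normalizer (S.rightCentralizer : Set (Equiv.Perm Q)) := by
  refine (Subgroup.closure_le _).2 (Set.union_subset ?_ ?_)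
  · rintro _ ⟨x, rfl⟩
    refine Subgroup.mem_normalizer_iff.2 fun p => ⟨hS.leftPerm_conj_mem x, fun hp => ?_⟩
    convert hS.leftPerm_inv_conj_mem x hp using 1
    group
  · rintro _ ⟨x, rfl⟩
    have hcomm {p : Equiv.Perm Q} (hp : p ∈ S.rightCentralizer) :
        S.rightPerm x * p = p * S.rightPerm x :=
      Subgroup.mem_centralizer_iff.1 hp _ ⟨x, rfl⟩
    refine Subgroup.mem_normalizer_iff.2 fun p => ⟨fun hp => ?_, fun hp => ?_⟩
    · rwa [hcomm hp, mul_inv_cancel_right]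
    · have h := hcomm hp
      rw [inv_mul_cancel_right, mul_assoc, mul_right_inj] at h
      rwa [mul_assoc, h] at hp

lemma isNormalSubloop_lnuc (hS : S.IsLeftC) : S.IsNormalSubloop S.lnuc := by
  refine ⟨S.isSubloop_lnuc, fun x => ?_, fun x y => ?_, fun x y => ?_⟩
  · ext z
    constructor
    · rintro ⟨a, ha, rfl⟩
      have hp := hS.leftPerm_conj_mem x (S.leftPerm_mem_rightCentralizer_iff.2 ha)
      refine ⟨_, S.apply_e_mem_lnuc hp, ?_⟩
      refine (S.mem_rightCentralizer_iff.1 hp S.e x).trans ?_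
      change S.mul x (S.mul a (S.ldiv x (S.mul S.e x))) = S.mul x a
      rw [S.one_mul, S.ldiv_self, S.mul_one]
    · rintro ⟨a, ha, rfl⟩
      have hp := hS.leftPerm_inv_conj_mem x (S.leftPerm_mem_rightCentralizer_iff.2 ha)
      refine ⟨_, S.apply_e_mem_lnuc hp, ?_⟩
      change S.mul x (S.ldiv x (S.mul a (S.mul x S.e))) = S.mul a x
      rw [S.mul_ldiv, S.mul_one]
  · exact Set.image_congr fun a ha => hS.lnuc_subset_mnuc ha x y
  · exact Set.image_congr fun a ha => (ha x y).symm

end IsLeftC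

end LoopStr

/-- In a left C loop (`x·(x·(y·z)) = ((x·x)·y)·z`), with
`N = Nuc_ℓ(Q)`, the set `{L_a : a ∈ N}` is a normal subgroup of `Mlt(Q)`
(it is contained in `Mlt(Q)`, contains the identity, is closed under
multiplication and inverses, and is invariant under conjugation by elements of
`Mlt(Q)`), and `N` is a normal subloop of `Q`. -/
theorem leftC_lnuc_normal {Q : Type*} (S : LoopStr Q)
    (hLC : ∀ x y z : Q, S.mul x (S.mul x (S.mul y z)) = S.mul (S.mul (S.mul x x) y) z) :
    (S.leftPerm '' S.lnuc ⊆ (S.Mlt : Set (Equiv.Perm Q))) ∧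
    (1 : Equiv.Perm Q) ∈ S.leftPerm '' S.lnuc ∧
    (∀ p ∈ S.leftPerm '' S.lnuc, ∀ q ∈ S.leftPerm '' S.lnuc,
      p * q ∈ S.leftPerm '' S.lnuc) ∧
    (∀ p ∈ S.leftPerm '' S.lnuc, p⁻¹ ∈ S.leftPerm '' S.lnuc) ∧
    (∀ g ∈ S.Mlt, ∀ p ∈ S.leftPerm '' S.lnuc, g * p * g⁻¹ ∈ S.leftPerm '' S.lnuc) ∧
    S.IsNormalSubloop S.lnuc := by
  have hS : S.IsLeftC := hLC
  rw [S.leftPerm_image_lnuc]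
  refine ⟨?_, one_mem _, fun p hp q hq => mul_mem hp hq, fun p hp => inv_mem hp,
    fun g hg p hp => (Subgroup.mem_normalizer_iff.1 (hS.Mlt_le_normalizer hg) p).1 hp,
    hS.isNormalSubloop_lnuc⟩
  rw [← S.leftPerm_image_lnuc]
  rintro _ ⟨a, -, rfl⟩
  exact Subgroup.subset_closure (Or.inl ⟨a, rfl⟩)
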